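/- Let X be a stable set of functions on Ω. A stable Dynkin system on X is a stable σ-algebra if and only if it is closed under finite conditional intersections. -/

import Mathlib

/-!
Common framework for conditional set theory and conditional measure theory
in the sense of Drapeau–Jamneshan–Karliczek–Kupper, specialized to the
measure algebra associated to a probability space `(Ω, F, P)`.

Functions on `Ω` are identified when they agree `P`-a.s., and measurable sets
are identified when their symmetric difference is a null set.  Conditional
subsets of a stable set `X` are represented by raw pairs `(V, A)` consisting of
a set of functions and a (measurable) base set; all notions are formulated with
respect to the almost-sure identifications via the relations `cle` and `ceq`.
-/

open MeasureTheory Filter Set Topology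
open scoped ENNReal

noncomputable section

namespace CondMT

variable {Ω E F' : Type*}

/-- A countable partition of `Ω` into measurable sets (modulo `P`-null sets). -/
structure Partition {Ω : Type*} (mΩ : MeasurableSpace Ω) (P : @Measure Ω mΩ) where
  part : ℕ → Set Ω
  meas : ∀ k, MeasurableSet[mΩ] (part k)
  disj : ∀ i j, i ≠ j → P (part i ∩ part j) = 0
  cover : P ((⋃ k, part k)ᶜ) = 0

variable {mΩ : MeasurableSpace Ω}

open Classical in
/-- The concatenation `∑ x_k|A_k` of a sequence of functions along a partition:
the (a.s. unique) function equal to `x_k` on `A_k` for every `k`. -/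
def Partition.concat {P : @Measure Ω mΩ} (A : Partition mΩ P) (x : ℕ → Ω → E) : Ω → E :=
  fun ω => if h : ∃ k, ω ∈ A.part k then x (Nat.find h) ω else x 0 ω

/-- A stable set of functions on `Ω`: nonempty, closed under a.s. modification and
closed under countable concatenations along partitions. -/
def Stable (P : @Measure Ω mΩ) (X : Set (Ω → E)) : Prop :=
  X.Nonempty ∧ (∀ x ∈ X, ∀ y, x =ᵐ[P] y → y ∈ X) ∧
    ∀ (A : Partition mΩ P) (x : ℕ → Ω → E), (∀ k, x k ∈ X) → A.concat x ∈ X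

/-- Raw data of a conditional subset `V|A`: the carrier `V` and the base set `A`. -/
abbrev CondRaw (Ω E : Type*) := Set (Ω → E) × Set Ω

/-- `S` represents a conditional subset of the stable set `X`: the carrier is a
stable subset of `X` and the base is measurable. -/
def IsCond (P : @Measure Ω mΩ) (X : Set (Ω → E)) (S : CondRaw Ω E) : Prop :=
  Stable P S.1 ∧ S.1 ⊆ X ∧ MeasurableSet[mΩ] S.2

/-- Conditional inclusion `V|A ⊑ W|B`: `A ⊆ B` a.s., and every `x|A`, `x ∈ V`,
coincides a.s. on `A` with some `y|A`, `y ∈ W`. -/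
def cle (P : @Measure Ω mΩ) (S T : CondRaw Ω E) : Prop :=
  P (S.2 \ T.2) = 0 ∧ ∀ x ∈ S.1, ∃ y ∈ T.1, ∀ᵐ ω ∂P, ω ∈ S.2 → x ω = y ω

/-- Identification of conditional subsets (equality in the conditional power set). -/
def ceq (P : @Measure Ω mΩ) (S T : CondRaw Ω E) : Prop := cle P S T ∧ cle P T S

/-- `x|C ∈ V|C`: the restriction of `x` to `C` agrees a.s. on `C` with an element of `V`. -/
def memOn (P : @Measure Ω mΩ) (C : Set Ω) (x : Ω → E) (V : Set (Ω → E)) : Prop :=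
  ∃ y ∈ V, ∀ᵐ ω ∂P, ω ∈ C → x ω = y ω

/-- `∑ V_k|A_k`, the set of concatenations of sequences taken from the `V_k`. -/
def concatSet (P : @Measure Ω mΩ) (A : Partition mΩ P) (V : ℕ → Set (Ω → E)) :
    Set (Ω → E) :=
  {f | ∃ x : ℕ → Ω → E, (∀ k, x k ∈ V k) ∧ f =ᵐ[P] A.concat x}

/-- Countable concatenation `∑ (V_k|B_k)|A_k := (∑ V_k|A_k)|⋃ (A_k ∩ B_k)` in the
conditional power set. -/
def condConcat (P : @Measure Ω mΩ) (A : Partition mΩ P) (S : ℕ → CondRaw Ω E) :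
    CondRaw Ω E :=
  (concatSet P A fun k => (S k).1, ⋃ k, A.part k ∩ (S k).2)

/-- Restriction `(V|A)|B := V|(A ∩ B)`. -/
def crestrict (S : CondRaw Ω E) (B : Set Ω) : CondRaw Ω E := (S.1, S.2 ∩ B)

/-- The degenerate conditional subset `X|∅ = {∗}`, the least element of `P(X)`. -/
def cbot (X : Set (Ω → E)) : CondRaw Ω E := (X, (∅ : Set Ω))

/-- The greatest element `X = X|Ω` of `P(X)`. -/
def ctop (X : Set (Ω → E)) : CondRaw Ω E := (X, (univ : Set Ω))

/-- `a` is a supremum (conditional union) of the family `s` in `(P(X), ⊑)`. -/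
def IsSupOf (P : @Measure Ω mΩ) (X : Set (Ω → E)) (s : Set (CondRaw Ω E))
    (a : CondRaw Ω E) : Prop :=
  IsCond P X a ∧ (∀ b ∈ s, cle P b a) ∧
    ∀ c, IsCond P X c → (∀ b ∈ s, cle P b c) → cle P a c

/-- `a` is an infimum (conditional intersection) of the family `s` in `(P(X), ⊑)`. -/
def IsInfOf (P : @Measure Ω mΩ) (X : Set (Ω → E)) (s : Set (CondRaw Ω E))
    (a : CondRaw Ω E) : Prop :=
  IsCond P X a ∧ (∀ b ∈ s, cle P a b) ∧
    ∀ c, IsCond P X c → (∀ b ∈ s, cle P c b) → cle P c a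

open Classical in
/-- The conditional union (supremum) of a family of conditional subsets. -/
def cSup (P : @Measure Ω mΩ) (X : Set (Ω → E)) (s : Set (CondRaw Ω E)) : CondRaw Ω E :=
  if h : ∃ a, IsSupOf P X s a then h.choose else ctop X

open Classical in
/-- The conditional intersection (infimum) of a family of conditional subsets. -/
def cInf (P : @Measure Ω mΩ) (X : Set (Ω → E)) (s : Set (CondRaw Ω E)) : CondRaw Ω E :=
  if h : ∃ a, IsInfOf P X s a then h.choose else ctop X

/-- Binary conditional union. -/
def cSup₂ (P : @Measure Ω mΩ) (X : Set (Ω → E)) (a b : CondRaw Ω E) : CondRaw Ω E :=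
  cSup P X {a, b}

/-- Binary conditional intersection. -/
def cInf₂ (P : @Measure Ω mΩ) (X : Set (Ω → E)) (a b : CondRaw Ω E) : CondRaw Ω E :=
  cInf P X {a, b}

/-- Conditional union of an indexed family. -/
def cSupFam (P : @Measure Ω mΩ) (X : Set (Ω → E)) {ι : Sort*}
    (S : ι → CondRaw Ω E) : CondRaw Ω E :=
  cSup P X (range S)

/-- Conditional intersection of an indexed family. -/
def cInfFam (P : @Measure Ω mΩ) (X : Set (Ω → E)) {ι : Sort*}
    (S : ι → CondRaw Ω E) : CondRaw Ω E :=
  cInf P X (range S)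

/-- Disjointness of conditional subsets: `V|A ⊓ W|B = {∗}`. -/
def cdisjoint (P : @Measure Ω mΩ) (X : Set (Ω → E)) (a b : CondRaw Ω E) : Prop :=
  ceq P (cInf₂ P X a b) (cbot X)

/-- The conditional complement `(V|A)^⊏ := ⊔ {W|B : W|B ⊓ V|A = {∗}}`. -/
def ccompl (P : @Measure Ω mΩ) (X : Set (Ω → E)) (a : CondRaw Ω E) : CondRaw Ω E :=
  cSup P X {b | IsCond P X b ∧ cdisjoint P X b a}

open Classical in
/-- The largest measurable set (mod null sets) satisfying a property `Φ`,
obtained by an exhaustion argument; junk value `∅` if there is none. -/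
def largestSet (P : @Measure Ω mΩ) (Φ : Set Ω → Prop) : Set Ω :=
  if h : ∃ C, MeasurableSet[mΩ] C ∧ Φ C ∧
      ∀ C', MeasurableSet[mΩ] C' → Φ C' → P (C' \ C) = 0
  then h.choose else ∅

open Classical in
/-- The smallest measurable set (mod null sets) satisfying a property `Φ`. -/
def smallestSet (P : @Measure Ω mΩ) (Φ : Set Ω → Prop) : Set Ω :=
  if h : ∃ C, MeasurableSet[mΩ] C ∧ Φ C ∧
      ∀ C', MeasurableSet[mΩ] C' → Φ C' → P (C \ C') = 0
  then h.choose else univ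

/-- Essential infimum `inf_i A_i` of a family of measurable sets in the measure algebra. -/
def essInfFam (P : @Measure Ω mΩ) {ι : Sort*} (A : ι → Set Ω) : Set Ω :=
  largestSet P fun C => ∀ i, P (C \ A i) = 0

/-- Essential supremum `sup_i A_i` of a family of measurable sets in the measure algebra. -/
def essSupFam (P : @Measure Ω mΩ) {ι : Sort*} (A : ι → Set Ω) : Set Ω :=
  smallestSet P fun C => ∀ i, P (A i \ C) = 0

/-- A stable collection: a nonempty, `ceq`-saturated family of conditional subsets of `X`
closed under countable concatenations. -/
def IsStableColl (P : @Measure Ω mΩ) (X : Set (Ω → E)) (𝒞 : Set (CondRaw Ω E)) : Prop :=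
  𝒞.Nonempty ∧ (∀ S ∈ 𝒞, IsCond P X S) ∧
    (∀ S ∈ 𝒞, ∀ T, IsCond P X T → ceq P S T → T ∈ 𝒞) ∧
    ∀ (A : Partition mΩ P) (S : ℕ → CondRaw Ω E), (∀ k, S k ∈ 𝒞) → condConcat P A S ∈ 𝒞

/-- A stable σ-algebra on `X`. -/
def IsStableSigma (P : @Measure Ω mΩ) (X : Set (Ω → E)) (𝒳 : Set (CondRaw Ω E)) : Prop :=
  IsStableColl P X 𝒳 ∧ ctop X ∈ 𝒳 ∧ (∀ S ∈ 𝒳, ccompl P X S ∈ 𝒳) ∧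
    ∀ S : ℕ → CondRaw Ω E, (∀ k, S k ∈ 𝒳) → cSupFam P X S ∈ 𝒳

/-- A stable Dynkin system on `X`. -/
def IsStableDynkin (P : @Measure Ω mΩ) (X : Set (Ω → E)) (𝒟 : Set (CondRaw Ω E)) : Prop :=
  IsStableColl P X 𝒟 ∧ ctop X ∈ 𝒟 ∧ (∀ S ∈ 𝒟, ccompl P X S ∈ 𝒟) ∧
    ∀ S : ℕ → CondRaw Ω E, (∀ k, S k ∈ 𝒟) →
      (∀ i j, i ≠ j → cdisjoint P X (S i) (S j)) → cSupFam P X S ∈ 𝒟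

/-- A stable ring on `X`. -/
def IsStableRing (P : @Measure Ω mΩ) (X : Set (Ω → E)) (𝒳 : Set (CondRaw Ω E)) : Prop :=
  IsStableColl P X 𝒳 ∧
    ∀ S ∈ 𝒳, ∀ T ∈ 𝒳, cInf₂ P X S (ccompl P X T) ∈ 𝒳 ∧ cSup₂ P X S T ∈ 𝒳

/-- The stable σ-algebra generated by a collection `ℰ`. -/
def sigmaGen (P : @Measure Ω mΩ) (X : Set (Ω → E)) (ℰ : Set (CondRaw Ω E)) :
    Set (CondRaw Ω E) :=
  ⋂₀ {𝒳 | IsStableSigma P X 𝒳 ∧ ℰ ⊆ 𝒳}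

/-- The stable Dynkin system generated by a collection `ℰ`. -/
def dynkinGen (P : @Measure Ω mΩ) (X : Set (Ω → E)) (ℰ : Set (CondRaw Ω E)) :
    Set (CondRaw Ω E) :=
  ⋂₀ {𝒟 | IsStableDynkin P X 𝒟 ∧ ℰ ⊆ 𝒟}

/-! ### Stable set functions and stable measures -/

/-- A stable set function `μ : 𝒞 → L̄⁰₊` (represented by measurable representatives,
well defined modulo identification, and commuting with countable concatenations). -/
def IsStableSetFun (P : @Measure Ω mΩ) (𝒞 : Set (CondRaw Ω E))
    (μ : CondRaw Ω E → Ω → ℝ≥0∞) : Prop :=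
  (∀ S ∈ 𝒞, Measurable[mΩ] (μ S)) ∧
    (∀ S ∈ 𝒞, ∀ T ∈ 𝒞, ceq P S T → μ S =ᵐ[P] μ T) ∧
    ∀ (A : Partition mΩ P) (S : ℕ → CondRaw Ω E), (∀ k, S k ∈ 𝒞) →
      μ (condConcat P A S) =ᵐ[P] A.concat fun k => μ (S k)

/-- Property (M1): `μ(V|A) = μ(V|A)|A + 0|Aᶜ`. -/
def M1 (P : @Measure Ω mΩ) (𝒞 : Set (CondRaw Ω E)) (μ : CondRaw Ω E → Ω → ℝ≥0∞) : Prop :=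
  ∀ S ∈ 𝒞, μ S =ᵐ[P] S.2.indicator (μ S)

/-- Property (M2): countable additivity on pairwise disjoint sequences whose
conditional union belongs to the domain. -/
def M2 (P : @Measure Ω mΩ) (X : Set (Ω → E)) (𝒳 : Set (CondRaw Ω E))
    (μ : CondRaw Ω E → Ω → ℝ≥0∞) : Prop :=
  ∀ S : ℕ → CondRaw Ω E, (∀ k, S k ∈ 𝒳) →
    (∀ i j, i ≠ j → cdisjoint P X (S i) (S j)) → cSupFam P X S ∈ 𝒳 →
    μ (cSupFam P X S) =ᵐ[P] fun ω => ∑' k, μ (S k) ω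

/-- Finite additivity: (M2) for finite pairwise disjoint families. -/
def FinAdd (P : @Measure Ω mΩ) (X : Set (Ω → E)) (𝒳 : Set (CondRaw Ω E))
    (μ : CondRaw Ω E → Ω → ℝ≥0∞) : Prop :=
  ∀ (n : ℕ) (S : Fin n → CondRaw Ω E), (∀ k, S k ∈ 𝒳) →
    (∀ i j, i ≠ j → cdisjoint P X (S i) (S j)) → cSupFam P X S ∈ 𝒳 →
    μ (cSupFam P X S) =ᵐ[P] fun ω => ∑ k, μ (S k) ω

/-- A stable measure (or stable pre-measure, when the domain is merely a stable
ring): a stable set function satisfying (M1) and (M2). -/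
def IsStableMeasureOn (P : @Measure Ω mΩ) (X : Set (Ω → E)) (𝒳 : Set (CondRaw Ω E))
    (μ : CondRaw Ω E → Ω → ℝ≥0∞) : Prop :=
  IsStableSetFun P 𝒳 μ ∧ M1 P 𝒳 μ ∧ M2 P X 𝒳 μ

/-- A finite stable measure. -/
def IsFiniteStableMeasureOn (P : @Measure Ω mΩ) (X : Set (Ω → E))
    (𝒳 : Set (CondRaw Ω E)) (μ : CondRaw Ω E → Ω → ℝ≥0∞) : Prop :=
  IsStableMeasureOn P X 𝒳 μ ∧ ∀ᵐ ω ∂P, μ (ctop X) ω < ∞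

/-- A stable probability measure. -/
def IsStableProbOn (P : @Measure Ω mΩ) (X : Set (Ω → E)) (𝒳 : Set (CondRaw Ω E))
    (μ : CondRaw Ω E → Ω → ℝ≥0∞) : Prop :=
  IsStableMeasureOn P X 𝒳 μ ∧ μ (ctop X) =ᵐ[P] fun _ => (1 : ℝ≥0∞)

/-- A stable outer measure on the conditional power set of `X`. -/
def IsStableOuter (P : @Measure Ω mΩ) (X : Set (Ω → E))
    (μ : CondRaw Ω E → Ω → ℝ≥0∞) : Prop :=
  (∀ S, IsCond P X S → Measurable[mΩ] (μ S)) ∧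
    (∀ S T, IsCond P X S → IsCond P X T → ceq P S T → μ S =ᵐ[P] μ T) ∧
    (∀ (A : Partition mΩ P) (S : ℕ → CondRaw Ω E), (∀ k, IsCond P X (S k)) →
      μ (condConcat P A S) =ᵐ[P] A.concat fun k => μ (S k)) ∧
    (∀ S, IsCond P X S → ∀ B, MeasurableSet[mΩ] B →
      μ (crestrict S B) =ᵐ[P] B.indicator (μ S)) ∧
    (∀ S T, IsCond P X S → IsCond P X T → cle P S T → ∀ᵐ ω ∂P, μ S ω ≤ μ T ω) ∧
    ∀ S : ℕ → CondRaw Ω E, (∀ k, IsCond P X (S k)) →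
      ∀ᵐ ω ∂P, μ (cSupFam P X S) ω ≤ ∑' k, μ (S k) ω

/-- Stable Carathéodory measurability with respect to a stable outer measure. -/
def CaraMeasurable (P : @Measure Ω mΩ) (X : Set (Ω → E))
    (μ : CondRaw Ω E → Ω → ℝ≥0∞) (S : CondRaw Ω E) : Prop :=
  ∀ T, IsCond P X T →
    (fun ω => μ (cInf₂ P X T S) ω + μ (cInf₂ P X T (ccompl P X S)) ω) =ᵐ[P] μ T

/-! ### Stable functions, the stable Borel σ-algebra on `L⁰`, and the integral -/

/-- The stable set `L⁰_m(E)` of all (classes of) measurable functions `Ω → E`. -/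
def l0m (P : @Measure Ω mΩ) (E : Type*) [MeasurableSpace E] : Set (Ω → E) :=
  {x | AEMeasurable x P}

/-- A stable function between stable sets of functions. -/
def StableFun (P : @Measure Ω mΩ) (X : Set (Ω → E)) (Y : Set (Ω → F'))
    (f : (Ω → E) → Ω → F') : Prop :=
  (∀ x ∈ X, f x ∈ Y) ∧ (∀ x ∈ X, ∀ y ∈ X, x =ᵐ[P] y → f x =ᵐ[P] f y) ∧
    ∀ (A : Partition mΩ P) (x : ℕ → Ω → E), (∀ k, x k ∈ X) →
      f (A.concat x) =ᵐ[P] A.concat fun k => f (x k)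

/-- The conditional preimage `f⁻¹(W|A)`. -/
def cPreimage (P : @Measure Ω mΩ) (X : Set (Ω → E)) (f : (Ω → E) → Ω → F')
    (W : CondRaw Ω F') : CondRaw Ω E :=
  ({x ∈ X | memOn P (largestSet P fun C => P (C \ W.2) = 0 ∧ ∃ x ∈ X, memOn P C (f x) W.1)
      (f x) W.1},
    largestSet P fun C => P (C \ W.2) = 0 ∧ ∃ x ∈ X, memOn P C (f x) W.1)

/-- The stable Borel σ-algebra `B(L⁰)` on `L⁰`, generated by the stable open balls. -/
def borelL0 (P : @Measure Ω mΩ) : Set (CondRaw Ω ℝ) :=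
  sigmaGen P (l0m P ℝ)
    {S | ∃ r ε : Ω → ℝ, AEMeasurable r P ∧ AEMeasurable ε P ∧ (∀ᵐ ω ∂P, 0 < ε ω) ∧
      ceq P S ({s | AEMeasurable s P ∧ ∀ᵐ ω ∂P, |s ω - r ω| < ε ω}, univ)}

/-- A stably measurable function `f : X → L⁰` with respect to a stable σ-algebra `𝒳`. -/
def StablyMeasurable (P : @Measure Ω mΩ) (X : Set (Ω → E)) (𝒳 : Set (CondRaw Ω E))
    (f : (Ω → E) → Ω → ℝ) : Prop :=
  StableFun P X (l0m P ℝ) f ∧ ∀ W ∈ borelL0 P, cPreimage P X f W ∈ 𝒳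

/-- The base set `A_x` of the stable indicator function of `S = V|A` at `x`. -/
def indBase (P : @Measure Ω mΩ) (S : CondRaw Ω E) (x : Ω → E) : Set Ω :=
  largestSet P fun C => P (C \ S.2) = 0 ∧ memOn P C x S.1

/-- The stable indicator function `1_{V|A} : X → L⁰`. -/
def cIndicator (P : @Measure Ω mΩ) (S : CondRaw Ω E) (x : Ω → E) : Ω → ℝ :=
  (indBase P S x).indicator fun _ => (1 : ℝ)

/-- Data of a stable elementary function: coefficients and conditional sets. -/
def ElemRep (Ω E : Type*) := Σ n : ℕ, (Fin n → Ω → ℝ) × (Fin n → CondRaw Ω E)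

/-- The function `∑_{k ≤ n} r_k 1_{V_k|A_k}` represented by `ρ`. -/
def repFun (P : @Measure Ω mΩ) (ρ : ElemRep Ω E) : (Ω → E) → Ω → ℝ :=
  fun x ω => ∑ k, ρ.2.1 k ω * cIndicator P (ρ.2.2 k) x ω

/-- The representation `ρ` is admissible: nonnegative `L⁰`-coefficients and a finite
pairwise disjoint family in `𝒳` whose conditional union is `X`. -/
def GoodRep (P : @Measure Ω mΩ) (X : Set (Ω → E)) (𝒳 : Set (CondRaw Ω E))
    (ρ : ElemRep Ω E) : Prop :=
  (∀ k, AEMeasurable (ρ.2.1 k) P) ∧ (∀ k, ∀ᵐ ω ∂P, 0 ≤ ρ.2.1 k ω) ∧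
    (∀ k, ρ.2.2 k ∈ 𝒳) ∧ (∀ i j, i ≠ j → cdisjoint P X (ρ.2.2 i) (ρ.2.2 j)) ∧
    ceq P (cSupFam P X ρ.2.2) (ctop X)

/-- A stable elementary function. -/
def IsElementary (P : @Measure Ω mΩ) (X : Set (Ω → E)) (𝒳 : Set (CondRaw Ω E))
    (f : (Ω → E) → Ω → ℝ) : Prop :=
  ∃ ρ : ElemRep Ω E, GoodRep P X 𝒳 ρ ∧ ∀ x ∈ X, f x =ᵐ[P] repFun P ρ x

/-- The stable Lebesgue integral `∑_k r_k μ(V_k|A_k)` of the elementary representation. -/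
def repInt (μ : CondRaw Ω E → Ω → ℝ≥0∞) (ρ : ElemRep Ω E) : Ω → ℝ≥0∞ :=
  fun ω => ∑ k, ENNReal.ofReal (ρ.2.1 k ω) * μ (ρ.2.2 k) ω

/-- The stable Lebesgue integral of a nonnegative function, as the supremum of the
integrals of the dominated stable elementary functions. -/
def cIntNN (P : @Measure Ω mΩ) (X : Set (Ω → E)) (𝒳 : Set (CondRaw Ω E))
    (μ : CondRaw Ω E → Ω → ℝ≥0∞) (f : (Ω → E) → Ω → ℝ) : Ω → ℝ≥0∞ :=
  fun ω =>
    ⨆ ρ : {ρ : ElemRep Ω E // GoodRep P X 𝒳 ρ ∧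
        ∀ x ∈ X, ∀ᵐ ω' ∂P, repFun P ρ x ω' ≤ f x ω'},
      repInt μ ρ.1 ω

/-- The positive part `f⁺` of an `L⁰`-valued function. -/
def fplus (f : (Ω → E) → Ω → ℝ) : (Ω → E) → Ω → ℝ := fun x ω => max (f x ω) 0

/-- The negative part `f⁻` of an `L⁰`-valued function. -/
def fminus (f : (Ω → E) → Ω → ℝ) : (Ω → E) → Ω → ℝ := fun x ω => max (-(f x ω)) 0

/-- Stable integrability of `f : X → L⁰`. -/
def CIntegrable (P : @Measure Ω mΩ) (X : Set (Ω → E)) (𝒳 : Set (CondRaw Ω E))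
    (μ : CondRaw Ω E → Ω → ℝ≥0∞) (f : (Ω → E) → Ω → ℝ) : Prop :=
  StablyMeasurable P X 𝒳 f ∧ (∀ᵐ ω ∂P, cIntNN P X 𝒳 μ (fplus f) ω < ∞) ∧
    ∀ᵐ ω ∂P, cIntNN P X 𝒳 μ (fminus f) ω < ∞

/-- The stable Lebesgue integral `∫_X f dμ := ∫ f⁺ dμ − ∫ f⁻ dμ`. -/
def cInt (P : @Measure Ω mΩ) (X : Set (Ω → E)) (𝒳 : Set (CondRaw Ω E))
    (μ : CondRaw Ω E → Ω → ℝ≥0∞) (f : (Ω → E) → Ω → ℝ) : Ω → ℝ :=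
  fun ω => (cIntNN P X 𝒳 μ (fplus f) ω).toReal - (cIntNN P X 𝒳 μ (fminus f) ω).toReal

/-! ### Products and sections -/

/-- The pairing `ω ↦ (x ω, y ω)`. -/
def pairFn (x : Ω → E) (y : Ω → F') : Ω → E × F' := fun ω => (x ω, y ω)

/-- The Cartesian product `X × Y` of two stable sets, as a stable set of functions
`Ω → E × F'`. -/
def prodSet (P : @Measure Ω mΩ) (X : Set (Ω → E)) (Y : Set (Ω → F')) :
    Set (Ω → E × F') :=
  {z | ∃ x ∈ X, ∃ y ∈ Y, z =ᵐ[P] pairFn x y}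

/-- The conditional rectangle `V|A × W|B := (V × W)|A ∩ B`. -/
def crect (P : @Measure Ω mΩ) (S : CondRaw Ω E) (T : CondRaw Ω F') :
    CondRaw Ω (E × F') :=
  (prodSet P S.1 T.1, S.2 ∩ T.2)

/-- The stable product σ-algebra `𝒳 ⊗ 𝒴`, generated by the conditional rectangles. -/
def prodSigma (P : @Measure Ω mΩ) (X : Set (Ω → E)) (Y : Set (Ω → F'))
    (𝒳 : Set (CondRaw Ω E)) (𝒴 : Set (CondRaw Ω F')) : Set (CondRaw Ω (E × F')) :=
  sigmaGen P (prodSet P X Y) {R | ∃ S ∈ 𝒳, ∃ T ∈ 𝒴, ceq P R (crect P S T)}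

/-- The conditional `x`-section `(Z|C)_x` of a conditional subset of `X × Y`. -/
def xsection (P : @Measure Ω mΩ) (Y : Set (Ω → F')) (Z : CondRaw Ω (E × F'))
    (x : Ω → E) : CondRaw Ω F' :=
  ({y ∈ Y | memOn P (largestSet P fun D => P (D \ Z.2) = 0 ∧ ∃ y ∈ Y, memOn P D (pairFn x y) Z.1)
      (pairFn x y) Z.1},
    largestSet P fun D => P (D \ Z.2) = 0 ∧ ∃ y ∈ Y, memOn P D (pairFn x y) Z.1)

/-- The conditional `y`-section `(Z|C)_y` of a conditional subset of `X × Y`. -/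
def ysection (P : @Measure Ω mΩ) (X : Set (Ω → E)) (Z : CondRaw Ω (E × F'))
    (y : Ω → F') : CondRaw Ω E :=
  ({x ∈ X | memOn P (largestSet P fun D => P (D \ Z.2) = 0 ∧ ∃ x ∈ X, memOn P D (pairFn x y) Z.1)
      (pairFn x y) Z.1},
    largestSet P fun D => P (D \ Z.2) = 0 ∧ ∃ x ∈ X, memOn P D (pairFn x y) Z.1)

/-! ### Conditional subsets of `L⁰_m(E)` associated to measurable sets -/

/-- `L⁰_m(F) = {x ∈ L⁰_m(E) : x ∈ F a.s.}` for a measurable `F ⊆ E`. -/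
def l0mF (P : @Measure Ω mΩ) {E : Type*} [MeasurableSpace E] (F : Set E) : Set (Ω → E) :=
  {x | AEMeasurable x P ∧ ∀ᵐ ω ∂P, x ω ∈ F}

/-- `∑ L⁰_m(F_k)|A_k = {x ∈ L⁰_m(E) : x ∈ F_k a.s. on A_k for all k}`. -/
def l0mConcat (P : @Measure Ω mΩ) {E : Type*} [MeasurableSpace E]
    (A : Partition mΩ P) (F : ℕ → Set E) : Set (Ω → E) :=
  {x | AEMeasurable x P ∧ ∀ k, ∀ᵐ ω ∂P, ω ∈ A.part k → x ω ∈ F k}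

/-- The stable ring `ℛ` on `L⁰_m(E)` generated by a measurable structure on `E`:
all conditional subsets of the form `(∑ L⁰_m(F_k)|A_k)|B`. -/
def ringR (P : @Measure Ω mΩ) (E : Type*) [MeasurableSpace E] : Set (CondRaw Ω E) :=
  {S | ∃ (F : ℕ → Set E) (A : Partition mΩ P) (B : Set Ω),
    (∀ k, MeasurableSet (F k)) ∧ MeasurableSet[mΩ] B ∧
      ceq P S (l0mConcat P A F, B)}

end CondMT

namespace CondMT

section Helpers

variable {Ω E : Type*} {mΩ : MeasurableSpace Ω}

lemma ae_imp_iff (P : @Measure Ω mΩ) (A B : Set Ω) :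
    P (A \ B) = 0 ↔ ∀ᵐ ω ∂P, ω ∈ A → ω ∈ B := by
  rw [← ae_le_set]; rfl

/-- Exhaustion. -/
lemma exhaust (P : @Measure Ω mΩ) [IsProbabilityMeasure P] (Φ : Set Ω → Prop)
    (h0 : Φ ∅)
    (hU : ∀ C : ℕ → Set Ω, (∀ n, MeasurableSet (C n)) → (∀ n, Φ (C n)) → Φ (⋃ n, C n)) :
    ∃ C, MeasurableSet[mΩ] C ∧ Φ C ∧
      ∀ C', MeasurableSet[mΩ] C' → Φ C' → P (C' \ C) = 0 := by
  set K : Set ℝ≥0∞ := {r | ∃ C, MeasurableSet C ∧ Φ C ∧ P C = r} with hK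
  have hne : K.Nonempty := ⟨_, ∅, MeasurableSet.empty, h0, rfl⟩
  obtain ⟨u, -, hu, huK⟩ := exists_seq_tendsto_sSup hne (OrderTop.bddAbove K)
  choose C hC hΦ hP using huK
  refine ⟨⋃ n, C n, MeasurableSet.iUnion hC, hU C hC hΦ, fun C' hC' hΦ' => ?_⟩
  have hle : sSup K ≤ P (⋃ n, C n) := by
    refine le_of_tendsto' hu fun n => ?_
    rw [← hP n]
    exact measure_mono (subset_iUnion C n)
  have hU2 : Φ ((⋃ n, C n) ∪ C') := by
    have := hU (fun n => Nat.casesOn n C' C) (by rintro (_ | n) <;> simp [hC', hC])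
      (by rintro (_ | n) <;> simp [hΦ', hΦ])
    convert this using 1
    ext ω
    simp only [mem_union, mem_iUnion]
    constructor
    · rintro (⟨n, hn⟩ | h)
      · exact ⟨n + 1, hn⟩
      · exact ⟨0, h⟩
    · rintro ⟨_ | n, hn⟩
      · exact Or.inr hn
      · exact Or.inl ⟨n, hn⟩
  have hle2 : P ((⋃ n, C n) ∪ C') ≤ P (⋃ n, C n) :=
    (le_sSup (show _ ∈ K from ⟨_, (MeasurableSet.iUnion hC).union hC', hU2, rfl⟩)).trans hle
  have hd : P ((⋃ n, C n) ∪ C') = P (⋃ n, C n) + P (C' \ ⋃ n, C n) := by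
    rw [← measure_union disjoint_sdiff_right (hC'.diff (MeasurableSet.iUnion hC)),
      union_sdiff_self]
  rw [hd] at hle2
  have hfin : P (⋃ n, C n) ≠ ∞ := measure_ne_top _ _
  by_contra hpos
  exact absurd hle2 (not_le.2 (ENNReal.lt_add_right hfin hpos))

lemma concat_ae (P : @Measure Ω mΩ) (A : Partition mΩ P) (x : ℕ → Ω → E) :
    ∀ᵐ ω ∂P, (∃ k, ω ∈ A.part k) ∧ ∀ k, ω ∈ A.part k → A.concat x ω = x k ω := by
  have h1 : ∀ᵐ ω ∂P, ∃ k, ω ∈ A.part k := by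
    have := measure_eq_zero_iff_ae_notMem.1 A.cover
    filter_upwards [this] with ω hω
    simpa using hω
  have h2 : ∀ᵐ ω ∂P, ∀ i j, i ≠ j → ω ∉ A.part i ∩ A.part j := by
    rw [ae_all_iff]; intro i
    rw [ae_all_iff]; intro j
    by_cases hij : i = j
    · simp [hij]
    · filter_upwards [measure_eq_zero_iff_ae_notMem.1 (A.disj i j hij)] with ω hω _
      exact hω
  filter_upwards [h1, h2] with ω hω hd
  refine ⟨hω, fun k hk => ?_⟩
  classical
  unfold Partition.concat
  rw [dif_pos hω]
  have : Nat.find hω = k := by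
    by_contra hne
    exact hd _ _ hne ⟨Nat.find_spec hω, hk⟩
  rw [← this]

/-- Gluing countably many elements of a stable set along a (not nec. disjoint) sequence;
the result agrees a.s. with `x n` on `disjointed C n`, and with `y` outside. -/
lemma glue (P : @Measure Ω mΩ) {V : Set (Ω → E)} (hV : Stable P V) (C : ℕ → Set Ω)
    (hC : ∀ n, MeasurableSet (C n)) (x : ℕ → Ω → E) (hx : ∀ n, x n ∈ V) (y : Ω → E)
    (hy : y ∈ V) :
    ∃ z ∈ V, ∀ᵐ ω ∂P, (∀ n, ω ∈ disjointed C n → z ω = x n ω) ∧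
      (ω ∉ (⋃ n, C n) → z ω = y ω) := by
  let A : Partition mΩ P :=
    { part := fun n => Nat.casesOn n (⋃ n, C n)ᶜ (disjointed C)
      meas := by
        rintro (_ | n)
        · exact (MeasurableSet.iUnion hC).compl
        · exact MeasurableSet.disjointed hC n
      disj := by
        have key : ∀ n, (⋃ n, C n)ᶜ ∩ disjointed C n = ∅ := by
          intro n
          ext ω
          simp only [mem_inter_iff, mem_compl_iff, mem_empty_iff_false, iff_false, not_and]
          intro h1 h2
          exact h1 (mem_iUnion.2 ⟨n, disjointed_subset C n h2⟩)
        rintro (_ | i) (_ | j) hij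
        · exact absurd rfl hij
        · show P ((⋃ n, C n)ᶜ ∩ disjointed C j) = 0
          rw [key]; simp
        · show P (disjointed C i ∩ (⋃ n, C n)ᶜ) = 0
          rw [inter_comm, key]; simp
        · show P (disjointed C i ∩ disjointed C j) = 0
          have hd : Disjoint (disjointed C i) (disjointed C j) :=
            disjoint_disjointed C (by intro h; exact hij (by rw [h]))
          rw [hd.inter_eq]; simp
      cover := by
        convert measure_empty (μ := P)
        ext ω
        simp only [mem_compl_iff, mem_iUnion, not_exists, mem_empty_iff_false, iff_false,
          not_forall, not_not]
        by_cases h : ω ∈ ⋃ n, C n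
        · rw [← iUnion_disjointed] at h
          obtain ⟨n, hn⟩ := mem_iUnion.1 h
          exact ⟨n + 1, hn⟩
        · exact ⟨0, h⟩ }
  refine ⟨A.concat (fun n => Nat.casesOn n y x), hV.2.2 A _ ?_, ?_⟩
  · rintro (_ | n)
    · exact hy
    · exact hx n
  · filter_upwards [concat_ae P A (fun n => Nat.casesOn n y x)] with ω hω
    exact ⟨fun n hn => hω.2 (n + 1) hn, fun h => hω.2 0 h⟩

lemma glue₂ (P : @Measure Ω mΩ) {V : Set (Ω → E)} (hV : Stable P V) (C : Set Ω)
    (hC : MeasurableSet C) (x : Ω → E) (hx : x ∈ V) (y : Ω → E) (hy : y ∈ V) :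
    ∃ z ∈ V, ∀ᵐ ω ∂P, (ω ∈ C → z ω = x ω) ∧ (ω ∉ C → z ω = y ω) := by
  obtain ⟨z, hz, h⟩ := glue P hV (fun _ => C) (fun _ => hC) (fun _ => x) (fun _ => hx) y hy
  refine ⟨z, hz, ?_⟩
  filter_upwards [h] with ω hω
  refine ⟨fun hc => hω.1 0 ?_, fun hc => hω.2 (by simpa using hc)⟩
  simpa [disjointed_zero] using hc

lemma indBase_spec (P : @Measure Ω mΩ) [IsProbabilityMeasure P] {X : Set (Ω → E)}
    {S : CondRaw Ω E} (hS : IsCond P X S) (x : Ω → E) :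
    MeasurableSet (indBase P S x) ∧ (∀ᵐ ω ∂P, ω ∈ indBase P S x → ω ∈ S.2) ∧
    memOn P (indBase P S x) x S.1 ∧
    ∀ C, MeasurableSet C → (∀ᵐ ω ∂P, ω ∈ C → ω ∈ S.2) → memOn P C x S.1 →
      ∀ᵐ ω ∂P, ω ∈ C → ω ∈ indBase P S x := by
  obtain ⟨y, hy⟩ := hS.1.1
  have hex := exhaust P (fun C => P (C \ S.2) = 0 ∧ memOn P C x S.1)
    ⟨by simp, y, hy, by simp⟩ (by
      intro C hC h
      choose h1 w hw h2 using h
      refine ⟨?_, ?_⟩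
      · rw [ae_imp_iff]
        have h1' := ae_all_iff.2 fun n => (ae_imp_iff P _ _).1 (h1 n)
        filter_upwards [h1'] with ω hω hu
        obtain ⟨n, hn⟩ := mem_iUnion.1 hu
        exact hω n hn
      · obtain ⟨z, hz, hzz⟩ := glue P hS.1 C hC w hw y hy
        refine ⟨z, hz, ?_⟩
        filter_upwards [hzz, ae_all_iff.2 h2] with ω h3 h4 hu
        rw [← iUnion_disjointed] at hu
        obtain ⟨n, hn⟩ := mem_iUnion.1 hu
        rw [h3.1 n hn, h4 n (disjointed_subset C n hn)])
  have hsp := hex.choose_spec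
  have he : indBase P S x = hex.choose := by
    unfold indBase largestSet
    rw [dif_pos hex]
  rw [← he] at hsp
  refine ⟨hsp.1, (ae_imp_iff P _ _).1 hsp.2.1.1, hsp.2.1.2, fun C hC h1 h2 => ?_⟩
  exact (ae_imp_iff P _ _).1 (hsp.2.2 C hC ⟨(ae_imp_iff P _ _).2 h1, h2⟩)

lemma indBase_local (P : @Measure Ω mΩ) [IsProbabilityMeasure P] {X : Set (Ω → E)}
    {S : CondRaw Ω E} (hS : IsCond P X S) (x y : Ω → E) (C : Set Ω) (hC : MeasurableSet C)
    (hxy : ∀ᵐ ω ∂P, ω ∈ C → x ω = y ω) :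
    ∀ᵐ ω ∂P, ω ∈ C → (ω ∈ indBase P S x ↔ ω ∈ indBase P S y) := by
  have aux : ∀ x y : Ω → E, (∀ᵐ ω ∂P, ω ∈ C → x ω = y ω) →
      ∀ᵐ ω ∂P, ω ∈ C → (ω ∈ indBase P S x → ω ∈ indBase P S y) := by
    intro x y hxy
    obtain ⟨m, s, ⟨w, hw, hxw⟩, -⟩ := indBase_spec P hS x
    obtain ⟨-, -, -, mx⟩ := indBase_spec P hS y
    have := mx (indBase P S x ∩ C) (m.inter hC)
      (by filter_upwards [s] with ω h1 h2 using h1 h2.1)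
      ⟨w, hw, by
        filter_upwards [hxw, hxy] with ω h1 h2 h3
        rw [← h2 h3.2, h1 h3.1]⟩
    filter_upwards [this] with ω h1 h2 h3 using h1 ⟨h3, h2⟩
  filter_upwards [aux x y hxy, aux y x (by filter_upwards [hxy] with ω h h' using (h h').symm)]
    with ω h1 h2 h3 using ⟨h1 h3, h2 h3⟩

lemma cle_iff (P : @Measure Ω mΩ) [IsProbabilityMeasure P] {X : Set (Ω → E)}
    {S T : CondRaw Ω E} (hS : IsCond P X S) (hT : IsCond P X T) :
    cle P S T ↔ ∀ x ∈ X, ∀ᵐ ω ∂P, ω ∈ indBase P S x → ω ∈ indBase P T x := by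
  constructor
  · rintro ⟨h1, h2⟩ x -
    rw [ae_imp_iff] at h1
    obtain ⟨m, s, ⟨w, hw, hxw⟩, -⟩ := indBase_spec P hS x
    obtain ⟨v, hv, hwv⟩ := h2 w hw
    refine (indBase_spec P hT x).2.2.2 _ m
      (by filter_upwards [s, h1] with ω a b c using b (a c)) ⟨v, hv, ?_⟩
    filter_upwards [hxw, hwv, s] with ω a b c d
    rw [a d, b (c d)]
  · intro h
    have key : ∀ x ∈ S.1, ∀ᵐ ω ∂P, ω ∈ S.2 → ω ∈ indBase P T x := by
      intro x hx
      have h1 := (indBase_spec P hS x).2.2.2 S.2 hS.2.2 (by simp) ⟨x, hx, by simp⟩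
      filter_upwards [h1, h x (hS.2.1 hx)] with ω a b c using b (a c)
    refine ⟨?_, fun x hx => ?_⟩
    · obtain ⟨x, hx⟩ := hS.1.1
      rw [ae_imp_iff]
      filter_upwards [key x hx, (indBase_spec P hT x).2.1] with ω a b c using b (a c)
    · obtain ⟨-, -, ⟨w, hw, hxw⟩, -⟩ := indBase_spec P hT x
      refine ⟨w, hw, ?_⟩
      filter_upwards [key x hx, hxw] with ω a b c using b (a c)

lemma ceq_iff (P : @Measure Ω mΩ) [IsProbabilityMeasure P] {X : Set (Ω → E)}
    {S T : CondRaw Ω E} (hS : IsCond P X S) (hT : IsCond P X T) :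
    ceq P S T ↔ ∀ x ∈ X, ∀ᵐ ω ∂P, ω ∈ indBase P S x ↔ ω ∈ indBase P T x := by
  unfold ceq
  rw [cle_iff P hS hT, cle_iff P hT hS]
  constructor
  · rintro ⟨h1, h2⟩ x hx
    filter_upwards [h1 x hx, h2 x hx] with ω a b using ⟨a, b⟩
  · intro h
    exact ⟨fun x hx => by filter_upwards [h x hx] with ω a using a.1,
      fun x hx => by filter_upwards [h x hx] with ω a using a.2⟩

/-- Every local function is the index function of a conditional set. -/
lemma realize (P : @Measure Ω mΩ) [IsProbabilityMeasure P] {X : Set (Ω → E)}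
    (hX : Stable P X) (φ : (Ω → E) → Set Ω) (hm : ∀ x ∈ X, MeasurableSet (φ x))
    (hl : ∀ x ∈ X, ∀ y ∈ X, ∀ C, MeasurableSet C → (∀ᵐ ω ∂P, ω ∈ C → x ω = y ω) →
      ∀ᵐ ω ∂P, ω ∈ C → (ω ∈ φ x ↔ ω ∈ φ y)) :
    ∃ S, IsCond P X S ∧ ∀ x ∈ X, ∀ᵐ ω ∂P, ω ∈ indBase P S x ↔ ω ∈ φ x := by
  obtain ⟨p, hp⟩ := hX.1
  obtain ⟨A, hA, ⟨x0, hx0, hAx0⟩, hmax⟩ := exhaust P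
    (fun C => ∃ x ∈ X, ∀ᵐ ω ∂P, ω ∈ C → ω ∈ φ x) ⟨p, hp, by simp⟩ (by
      intro C hC h
      choose x hx h1 using h
      obtain ⟨z, hz, hzz⟩ := glue P hX C hC x hx p hp
      refine ⟨z, hz, ?_⟩
      have h2 : ∀ᵐ ω ∂P, ∀ n, ω ∈ disjointed C n → (ω ∈ φ z ↔ ω ∈ φ (x n)) := by
        rw [ae_all_iff]; intro n
        refine hl z hz (x n) (hx n) _ (MeasurableSet.disjointed hC n) ?_
        filter_upwards [hzz] with ω h using h.1 n
      filter_upwards [h2, ae_all_iff.2 h1] with ω a b c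
      rw [← iUnion_disjointed] at c
      obtain ⟨n, hn⟩ := mem_iUnion.1 c
      exact (a n hn).2 (b n (disjointed_subset C n hn)))
  have hmax' : ∀ x ∈ X, ∀ᵐ ω ∂P, ω ∈ φ x → ω ∈ A := fun x hx =>
    (ae_imp_iff P _ _).1 (hmax (φ x) (hm x hx) ⟨x, hx, by simp⟩)
  have hS : IsCond P X (({x | x ∈ X ∧ ∀ᵐ ω ∂P, ω ∈ A → ω ∈ φ x}, A) : CondRaw Ω E) := by
    refine ⟨⟨⟨x0, hx0, hAx0⟩, ?_, ?_⟩, fun x hx => hx.1, hA⟩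
    · rintro x ⟨hx, h⟩ y hxy
      have hy := hX.2.1 x hx y hxy
      refine ⟨hy, ?_⟩
      filter_upwards [h, hl x hx y hy univ MeasurableSet.univ
        (by filter_upwards [hxy] with ω a _ using a)] with ω a b c
      exact (b (mem_univ _)).1 (a c)
    · intro B x hx
      have hc := hX.2.2 B x (fun k => (hx k).1)
      refine ⟨hc, ?_⟩
      have hca := concat_ae P B x
      have h2 : ∀ᵐ ω ∂P, ∀ n, ω ∈ B.part n → (ω ∈ φ (B.concat x) ↔ ω ∈ φ (x n)) := by
        rw [ae_all_iff]; intro n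
        refine hl _ hc (x n) (hx n).1 _ (B.meas n) ?_
        filter_upwards [hca] with ω h using h.2 n
      filter_upwards [hca, h2, ae_all_iff.2 fun k => (hx k).2] with ω a b c d
      obtain ⟨k, hk⟩ := a.1
      exact (b k hk).2 (c k d)
  refine ⟨_, hS, fun x hx => ?_⟩
  obtain ⟨m, s, ⟨w, hw, hxw⟩, mx⟩ := indBase_spec P hS x
  have h1 := hl x hx w hw.1 _ m hxw
  obtain ⟨z, hz, hzz⟩ := glue₂ P hX (φ x) (hm x hx) x hx x0 hx0
  have hz1 := hl z hz x hx (φ x) (hm x hx) (by filter_upwards [hzz] with ω h using h.1)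
  have hz2 := hl z hz x0 hx0 (φ x)ᶜ (hm x hx).compl (by filter_upwards [hzz] with ω h using h.2)
  have h2 := mx (φ x) (hm x hx) (hmax' x hx) ⟨z, ⟨hz, by
    filter_upwards [hz1, hz2, hAx0] with ω a b c d
    by_cases e : ω ∈ φ x
    · exact (a e).2 e
    · exact (b e).2 (c d)⟩, by
    filter_upwards [hzz] with ω a b using (a.1 b).symm⟩
  filter_upwards [h1, h2, s, hw.2] with ω a b c d
  exact ⟨fun e => (a e).2 (d (c e)), b⟩

lemma cSupFam_spec (P : @Measure Ω mΩ) [IsProbabilityMeasure P] {X : Set (Ω → E)}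
    (hX : Stable P X) (S : ℕ → CondRaw Ω E) (hS : ∀ k, IsCond P X (S k)) :
    IsCond P X (cSupFam P X S) ∧ ∀ x ∈ X, ∀ᵐ ω ∂P,
      ω ∈ indBase P (cSupFam P X S) x ↔ ∃ k, ω ∈ indBase P (S k) x := by
  obtain ⟨T, hT, hTi⟩ := realize P hX (fun x => ⋃ k, indBase P (S k) x)
    (fun x _ => MeasurableSet.iUnion fun k => (indBase_spec P (hS k) x).1) (by
      intro x _ y _ C hC hxy
      filter_upwards [ae_all_iff.2 fun k => indBase_local P (hS k) x y C hC hxy] with ω a b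
      simp only [mem_iUnion]
      exact exists_congr fun k => a k b)
  have hsup : IsSupOf P X (range S) T := by
    refine ⟨hT, ?_, ?_⟩
    · rintro _ ⟨k, rfl⟩
      rw [cle_iff P (hS k) hT]
      intro x hx
      filter_upwards [hTi x hx] with ω a b using a.2 (mem_iUnion.2 ⟨k, b⟩)
    · intro c hc h
      rw [cle_iff P hT hc]
      intro x hx
      have := ae_all_iff.2 fun k => (cle_iff P (hS k) hc).1 (h _ ⟨k, rfl⟩) x hx
      filter_upwards [hTi x hx, this] with ω a b d
      obtain ⟨k, hk⟩ := mem_iUnion.1 (a.1 d)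
      exact b k hk
  have hex : ∃ a, IsSupOf P X (range S) a := ⟨T, hsup⟩
  have he : cSupFam P X S = hex.choose := by
    unfold cSupFam cSup
    rw [dif_pos hex]
  have hsp := hex.choose_spec
  rw [← he] at hsp
  have hceq : ceq P (cSupFam P X S) T :=
    ⟨hsp.2.2 T hT hsup.2.1, hsup.2.2 _ hsp.1 hsp.2.1⟩
  refine ⟨hsp.1, fun x hx => ?_⟩
  filter_upwards [(ceq_iff P hsp.1 hT).1 hceq x hx, hTi x hx] with ω a b
  rw [a, b, mem_iUnion]

lemma cInf₂_spec (P : @Measure Ω mΩ) [IsProbabilityMeasure P] {X : Set (Ω → E)}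
    (hX : Stable P X) {S T : CondRaw Ω E} (hS : IsCond P X S) (hT : IsCond P X T) :
    IsCond P X (cInf₂ P X S T) ∧ ∀ x ∈ X, ∀ᵐ ω ∂P,
      ω ∈ indBase P (cInf₂ P X S T) x ↔ ω ∈ indBase P S x ∧ ω ∈ indBase P T x := by
  obtain ⟨R, hR, hRi⟩ := realize P hX (fun x => indBase P S x ∩ indBase P T x)
    (fun x _ => (indBase_spec P hS x).1.inter (indBase_spec P hT x).1) (by
      intro x _ y _ C hC hxy
      filter_upwards [indBase_local P hS x y C hC hxy, indBase_local P hT x y C hC hxy]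
        with ω a b c
      simp only [mem_inter_iff, a c, b c])
  have hinf : IsInfOf P X {S, T} R := by
    refine ⟨hR, ?_, ?_⟩
    · rintro b (rfl | rfl)
      · rw [cle_iff P hR hS]
        intro x hx
        filter_upwards [hRi x hx] with ω a b using (a.1 b).1
      · rw [cle_iff P hR hT]
        intro x hx
        filter_upwards [hRi x hx] with ω a b using (a.1 b).2
    · intro c hc h
      rw [cle_iff P hc hR]
      intro x hx
      filter_upwards [hRi x hx, (cle_iff P hc hS).1 (h S (by simp)) x hx,
        (cle_iff P hc hT).1 (h T (by simp)) x hx] with ω a b d e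
      exact a.2 ⟨b e, d e⟩
  have hex : ∃ a, IsInfOf P X {S, T} a := ⟨R, hinf⟩
  have he : cInf₂ P X S T = hex.choose := by
    unfold cInf₂ cInf
    rw [dif_pos hex]
  have hsp := hex.choose_spec
  rw [← he] at hsp
  have hceq : ceq P (cInf₂ P X S T) R :=
    ⟨hinf.2.2 _ hsp.1 hsp.2.1, hsp.2.2 R hR hinf.2.1⟩
  refine ⟨hsp.1, fun x hx => ?_⟩
  filter_upwards [(ceq_iff P hsp.1 hR).1 hceq x hx, hRi x hx] with ω a b
  rw [a, b, mem_inter_iff]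

lemma cbot_spec (P : @Measure Ω mΩ) [IsProbabilityMeasure P] {X : Set (Ω → E)}
    (hX : Stable P X) :
    IsCond P X (cbot X) ∧ ∀ x, ∀ᵐ ω ∂P, ω ∉ indBase P (cbot X) x := by
  have h : IsCond P X (cbot X) := ⟨hX, Subset.rfl, MeasurableSet.empty⟩
  refine ⟨h, fun x => ?_⟩
  filter_upwards [(indBase_spec P h x).2.1] with ω a b using a b

lemma ctop_spec (P : @Measure Ω mΩ) [IsProbabilityMeasure P] {X : Set (Ω → E)}
    (hX : Stable P X) :
    IsCond P X (ctop X) ∧ ∀ x ∈ X, ∀ᵐ ω ∂P, ω ∈ indBase P (ctop X) x := by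
  have h : IsCond P X (ctop X) := ⟨hX, Subset.rfl, MeasurableSet.univ⟩
  refine ⟨h, fun x hx => ?_⟩
  filter_upwards [(indBase_spec P h x).2.2.2 univ MeasurableSet.univ (by simp [ctop])
    ⟨x, hx, by simp⟩] with ω a using a (mem_univ _)

lemma cdisjoint_iff (P : @Measure Ω mΩ) [IsProbabilityMeasure P] {X : Set (Ω → E)}
    (hX : Stable P X) {S T : CondRaw Ω E} (hS : IsCond P X S) (hT : IsCond P X T) :
    cdisjoint P X S T ↔
      ∀ x ∈ X, ∀ᵐ ω ∂P, ¬ (ω ∈ indBase P S x ∧ ω ∈ indBase P T x) := by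
  obtain ⟨h1, h2⟩ := cInf₂_spec P hX hS hT
  obtain ⟨h3, h4⟩ := cbot_spec P hX
  unfold cdisjoint
  rw [ceq_iff P h1 h3]
  refine forall₂_congr fun x hx => ?_
  refine Filter.eventually_congr ?_
  filter_upwards [h2 x hx, h4 x] with ω a b
  rw [a]; tauto

lemma ccompl_spec (P : @Measure Ω mΩ) [IsProbabilityMeasure P] {X : Set (Ω → E)}
    (hX : Stable P X) {S : CondRaw Ω E} (hS : IsCond P X S) :
    IsCond P X (ccompl P X S) ∧ ∀ x ∈ X, ∀ᵐ ω ∂P,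
      ω ∈ indBase P (ccompl P X S) x ↔ ω ∉ indBase P S x := by
  obtain ⟨T, hT, hTi⟩ := realize P hX (fun x => (indBase P S x)ᶜ)
    (fun x _ => (indBase_spec P hS x).1.compl) (by
      intro x _ y _ C hC hxy
      filter_upwards [indBase_local P hS x y C hC hxy] with ω a b
      simp only [mem_compl_iff, a b])
  have hsup : IsSupOf P X {b | IsCond P X b ∧ cdisjoint P X b S} T := by
    refine ⟨hT, ?_, ?_⟩
    · rintro b ⟨hb, hd⟩
      rw [cle_iff P hb hT]
      intro x hx
      filter_upwards [hTi x hx, (cdisjoint_iff P hX hb hS).1 hd x hx] with ω a b c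
      exact a.2 fun h => b ⟨c, h⟩
    · intro c hc h
      refine h T ⟨hT, ?_⟩
      rw [cdisjoint_iff P hX hT hS]
      intro x hx
      filter_upwards [hTi x hx] with ω a b
      exact a.1 b.1 b.2
  have hex : ∃ a, IsSupOf P X {b | IsCond P X b ∧ cdisjoint P X b S} a := ⟨T, hsup⟩
  have he : ccompl P X S = hex.choose := by
    unfold ccompl cSup
    rw [dif_pos hex]
  have hsp := hex.choose_spec
  rw [← he] at hsp
  have hceq : ceq P (ccompl P X S) T :=
    ⟨hsp.2.2 T hT hsup.2.1, hsup.2.2 _ hsp.1 hsp.2.1⟩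
  refine ⟨hsp.1, fun x hx => ?_⟩
  filter_upwards [(ceq_iff P hsp.1 hT).1 hceq x hx, hTi x hx] with ω a b
  rw [a, b, mem_compl_iff]

/-- The intersection of the complements of the first `n` sets. -/
def remSeq (P : @Measure Ω mΩ) (X : Set (Ω → E)) (S : ℕ → CondRaw Ω E) : ℕ → CondRaw Ω E
  | 0 => ctop X
  | n + 1 => cInf₂ P X (remSeq P X S n) (ccompl P X (S n))

end Helpers

/-- **Proposition 3.4.**  A stable Dynkin system on a stable set `X` is a stable
σ-algebra if and only if it is closed under finite conditional intersections. -/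
theorem stableDynkin_isSigma_iff_closed_under_inter
    {Ω E : Type*} {mΩ : MeasurableSpace Ω} (P : @Measure Ω mΩ)
    [IsProbabilityMeasure P] (X : Set (Ω → E)) (hX : Stable P X)
    (𝒟 : Set (CondRaw Ω E)) (h𝒟 : IsStableDynkin P X 𝒟) :
    IsStableSigma P X 𝒟 ↔ ∀ S ∈ 𝒟, ∀ T ∈ 𝒟, cInf₂ P X S T ∈ 𝒟 := by
  obtain ⟨hcoll, htop, hcompl, hdisj⟩ := h𝒟
  have hcond := hcoll.2.1
  have hsat := hcoll.2.2.1
  constructor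
  · rintro ⟨-, -, -, hsup⟩ S hS T hT
    obtain ⟨i1, i2⟩ := cInf₂_spec P hX (hcond S hS) (hcond T hT)
    obtain ⟨s1, s2⟩ := ccompl_spec P hX (hcond S hS)
    obtain ⟨t1, t2⟩ := ccompl_spec P hX (hcond T hT)
    let U : ℕ → CondRaw Ω E := fun n => Nat.casesOn n (ccompl P X S) fun _ => ccompl P X T
    have hU : ∀ n, U n ∈ 𝒟 := by
      rintro (_ | n)
      · exact hcompl S hS
      · exact hcompl T hT
    obtain ⟨u1, u2⟩ := cSupFam_spec P hX U fun n => hcond _ (hU n)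
    obtain ⟨c1, c2⟩ := ccompl_spec P hX u1
    refine hsat _ (hcompl _ (hsup U hU)) _ i1 ?_
    rw [ceq_iff P c1 i1]
    intro x hx
    filter_upwards [i2 x hx, s2 x hx, t2 x hx, u2 x hx, c2 x hx] with ω a b c d e
    rw [e, d, a]
    constructor
    · intro h
      have h0 : ω ∉ indBase P (ccompl P X S) x := fun h' => h ⟨0, h'⟩
      have h1 : ω ∉ indBase P (ccompl P X T) x := fun h' => h ⟨1, h'⟩
      rw [b, not_not] at h0
      rw [c, not_not] at h1
      exact ⟨h0, h1⟩
    · rintro ⟨h0, h1⟩ ⟨_ | n, hn⟩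
      · exact b.1 hn h0
      · exact c.1 hn h1
  · intro hint
    refine ⟨hcoll, htop, hcompl, fun S hS => ?_⟩
    have hrem : ∀ n, remSeq P X S n ∈ 𝒟 := by
      intro n
      induction n with
      | zero => exact htop
      | succ n ih => exact hint _ ih _ (hcompl _ (hS n))
    have hri : ∀ n, ∀ x ∈ X, ∀ᵐ ω ∂P,
        ω ∈ indBase P (remSeq P X S n) x ↔ ∀ k < n, ω ∉ indBase P (S k) x := by
      intro n
      induction n with
      | zero =>
        intro x hx
        filter_upwards [(ctop_spec P hX).2 x hx] with ω a
        simpa [remSeq] using a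
      | succ n ih =>
        intro x hx
        filter_upwards [ih x hx, (ccompl_spec P hX (hcond _ (hS n))).2 x hx,
          (cInf₂_spec P hX (hcond _ (hrem n)) (hcond _ (hcompl _ (hS n)))).2 x hx] with ω a b c
        show ω ∈ indBase P (cInf₂ P X (remSeq P X S n) (ccompl P X (S n))) x ↔ _
        rw [c, a, b]
        constructor
        · rintro ⟨h1, h2⟩ k hk
          rcases Nat.lt_succ_iff_lt_or_eq.1 hk with h | rfl
          · exact h1 k h
          · exact h2
        · intro h
          exact ⟨fun k hk => h k (hk.trans (Nat.lt_succ_self n)), h n (Nat.lt_succ_self n)⟩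
    let R : ℕ → CondRaw Ω E := fun n => cInf₂ P X (S n) (remSeq P X S n)
    have hR : ∀ n, R n ∈ 𝒟 := fun n => hint _ (hS n) _ (hrem n)
    have hRi : ∀ n, ∀ x ∈ X, ∀ᵐ ω ∂P, ω ∈ indBase P (R n) x ↔
        ω ∈ indBase P (S n) x ∧ ∀ k < n, ω ∉ indBase P (S k) x := by
      intro n x hx
      filter_upwards [hri n x hx,
        (cInf₂_spec P hX (hcond _ (hS n)) (hcond _ (hrem n))).2 x hx] with ω a b
      rw [← a]; exact b
    have hRd : ∀ i j, i ≠ j → cdisjoint P X (R i) (R j) := by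
      intro i j hij
      rw [cdisjoint_iff P hX (hcond _ (hR i)) (hcond _ (hR j))]
      intro x hx
      filter_upwards [hRi i x hx, hRi j x hx] with ω a b
      rintro ⟨h1, h2⟩
      rcases lt_or_gt_of_ne hij with h | h
      · exact (b.1 h2).2 i h (a.1 h1).1
      · exact (a.1 h1).2 j h (b.1 h2).1
    obtain ⟨r1, r2⟩ := cSupFam_spec P hX R fun n => hcond _ (hR n)
    obtain ⟨s1, s2⟩ := cSupFam_spec P hX S fun n => hcond _ (hS n)
    refine hsat _ (hdisj R hR hRd) _ s1 ?_
    rw [ceq_iff P r1 s1]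
    intro x hx
    filter_upwards [r2 x hx, s2 x hx, ae_all_iff.2 fun n => hRi n x hx] with ω a b c
    rw [a, b]
    constructor
    · rintro ⟨k, hk⟩
      exact ⟨k, ((c k).1 hk).1⟩
    · intro h
      classical
      exact ⟨Nat.find h, (c _).2 ⟨Nat.find_spec h, fun k hk => Nat.find_min h hk⟩⟩

end CondMT
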